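/- arXiv:math/0407440 — 2 statements merged into one kernel-verified Lean document; each statement's English description precedes it below -/
import Mathlib

section
/- Suppose κ is the successor of an infinite cardinal. Then U_κ ≥ d̄_κ. -/
open Cardinal Set

namespace PaperFormal

noncomputable section

/-- The least (small) cardinality of a family `F : Set X` satisfying `P`. -/
def leastCard {X : Type 1} (P : Set X → Prop) : Cardinal.{0} :=
  sInf {c : Cardinal.{0} | ∃ F : Set X, P F ∧ Cardinal.lift.{1} c = #F}

/-- The collection of (codings of) functions from `κ` to `κ`. -/
def funOn (κ : Cardinal.{0}) : Set (Ordinal.{0} → Ordinal.{0}) :=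
  {f | ∀ α < κ.ord, f α < κ.ord}

/-- The unequality number `U_κ`. -/
def uneq (κ : Cardinal.{0}) : Cardinal.{0} :=
  leastCard fun F : Set (Ordinal.{0} → Ordinal.{0}) => F ⊆ funOn κ ∧
    ∀ g ∈ funOn κ, ∃ f ∈ F, {α | α < κ.ord ∧ f α = g α} = ∅

/-- The dominating number `d_κ`. -/
def domNum (κ : Cardinal.{0}) : Cardinal.{0} :=
  leastCard fun F : Set (Ordinal.{0} → Ordinal.{0}) => F ⊆ funOn κ ∧
    ∀ g ∈ funOn κ, ∃ f ∈ F, ∀ α < κ.ord, g α < f α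

/-- The number `d̄_κ`. -/
def domBar (κ : Cardinal.{0}) : Cardinal.{0} :=
  leastCard fun X : Set (Ordinal.{0} → Ordinal.{0}) => X ⊆ funOn κ ∧
    ∀ g ∈ funOn κ, ∃ x ⊆ X, x.Nonempty ∧ #x < Cardinal.lift.{1} κ ∧
      ∀ α < κ.ord, g α < sSup {o | ∃ f ∈ x, f α = o}

/-- The generalized Cantor space `^ρ2`, with points coded as subsets of `Iio ρ.ord`. -/
def cantor (ρ : Cardinal.{0}) : Set (Set Ordinal.{0}) := {x | x ⊆ Iio ρ.ord}

/-- A forcing condition: a pair `(a, t)` with `t ⊆ a ⊆ Iio ρ.ord` and `|a| < ν`. -/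
def IsCond (ν ρ : Cardinal.{0}) (a t : Set Ordinal.{0}) : Prop :=
  a ⊆ Iio ρ.ord ∧ t ⊆ a ∧ #a < Cardinal.lift.{1} ν

/-- The basic open set determined by a condition. -/
def basicOpen (ρ : Cardinal.{0}) (a t : Set Ordinal.{0}) : Set (Set Ordinal.{0}) :=
  {x | x ⊆ Iio ρ.ord ∧ x ∩ a = t}

/-- Dense open subsets of `^ρ2` (for the `<ν`-support topology). -/
def DenseOpen (ν ρ : Cardinal.{0}) (D : Set (Set Ordinal.{0})) : Prop :=
  D ⊆ cantor ρ ∧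
  (∀ x ∈ D, ∃ a t, IsCond ν ρ a t ∧ x ∈ basicOpen ρ a t ∧ basicOpen ρ a t ⊆ D) ∧
  (∀ a t, IsCond ν ρ a t → (basicOpen ρ a t ∩ D).Nonempty)

/-- Members of `M_{ν,ρ}`. -/
def Meager (ν ρ : Cardinal.{0}) (W : Set (Set Ordinal.{0})) : Prop :=
  W ⊆ cantor ρ ∧ ∃ X : Set (Set (Set Ordinal.{0})), X.Nonempty ∧
    #X ≤ Cardinal.lift.{1} ν ∧ (∀ D ∈ X, DenseOpen ν ρ D) ∧ W ∩ ⋂₀ X = ∅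

/-- The covering number for category `cov(M_{ν,ρ})`. -/
def covM (ν ρ : Cardinal.{0}) : Cardinal.{0} :=
  leastCard fun Y : Set (Set (Set Ordinal.{0})) =>
    (∀ W ∈ Y, Meager ν ρ W) ∧ ⋃₀ Y = cantor ρ

/-- A (`κ`-complete) ideal on `κ`. -/
structure IdealK (κ : Cardinal.{0}) where
  mem : Set (Set Ordinal.{0})
  subset_iio : ∀ A ∈ mem, A ⊆ Iio κ.ord
  singleton_mem : ∀ α < κ.ord, {α} ∈ mem
  subset_mem : ∀ A ∈ mem, ∀ B ⊆ A, B ∈ mem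
  sUnion_mem : ∀ X : Set (Set Ordinal.{0}), X ⊆ mem → #X < Cardinal.lift.{1} κ → ⋃₀ X ∈ mem
  ne_top : Iio κ.ord ∉ mem

/-- `J⁺`, the sets (⊆ κ) not in the ideal. -/
def IdealK.plus {κ : Cardinal.{0}} (J : IdealK κ) : Set (Set Ordinal.{0}) :=
  {A | A ⊆ Iio κ.ord ∧ A ∉ J.mem}

/-- `cof(J)`. -/
def IdealK.cof {κ : Cardinal.{0}} (J : IdealK κ) : Cardinal.{0} :=
  leastCard fun X : Set (Set Ordinal.{0}) =>
    X ⊆ J.mem ∧ ∀ A, A ∈ J.mem ↔ ∃ B ∈ X, A ⊆ B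

/-- `cof̄(J)`. -/
def IdealK.cofBar {κ : Cardinal.{0}} (J : IdealK κ) : Cardinal.{0} :=
  leastCard fun X : Set (Set Ordinal.{0}) =>
    X ⊆ J.mem ∧ ∀ A ∈ J.mem, ∃ x ⊆ X, #x < Cardinal.lift.{1} κ ∧ A ⊆ ⋃₀ x

/-- `non_κ(P)`. -/
def nonK (κ : Cardinal.{0}) (P : IdealK κ → Prop) : Cardinal.{0} :=
  sInf {c | ∃ J : IdealK κ, J.cof = c ∧ ¬ P J}

/-- `non̄_κ(P)`. -/
def nonBarK (κ : Cardinal.{0}) (P : IdealK κ → Prop) : Cardinal.{0} :=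
  sInf {c | ∃ J : IdealK κ, J.cofBar = c ∧ ¬ P J}

/-- Weak `P`-point. -/
def WeakPPoint {κ : Cardinal.{0}} (J : IdealK κ) : Prop :=
  ∀ A ∈ J.plus, ∀ f : Ordinal.{0} → Ordinal.{0},
    (∀ α ∈ A, f α < κ.ord) → (∀ β, {α ∈ A | f α = β} ∈ J.mem) →
    ∃ B ∈ J.plus, B ⊆ A ∧ ∀ β, #{α ∈ B | f α = β} < Cardinal.lift.{1} κ

/-- Weak `Q`-point. -/
def WeakQPoint {κ : Cardinal.{0}} (J : IdealK κ) : Prop :=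
  ∀ A ∈ J.plus, ∀ g ∈ funOn κ,
    ∃ B ∈ J.plus, B ⊆ A ∧ ∀ α ∈ B, ∀ β ∈ B, α < β → g α < β

/-- Weakly selective ideal. -/
def WeaklySelective {κ : Cardinal.{0}} (J : IdealK κ) : Prop :=
  WeakPPoint J ∧ WeakQPoint J

/-- Weak semi-`Q`-point. -/
def WeakSemiQPoint {κ : Cardinal.{0}} (J : IdealK κ) : Prop :=
  ∀ A ∈ J.plus, ∀ f : Ordinal.{0} → Ordinal.{0},
    (∀ α ∈ A, f α < κ.ord) →
    (∀ β, #{α ∈ A | f α = β} < Cardinal.lift.{1} κ) →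
    ∃ C ∈ J.plus, C ⊆ A ∧ ∀ β < κ.ord, #{α ∈ C | f α = β} ≤ Cardinal.lift.{1} β.card

/-- `P_κ(λ)`, coded as the small subsets of `Iio λ.ord`. -/
def smallSet (κ lam : Cardinal.{0}) : Set (Set Ordinal.{0}) :=
  {a | a ⊆ Iio lam.ord ∧ #a < Cardinal.lift.{1} κ}

/-- The ideal `I_{κ,λ}` of noncofinal subsets of `P_κ(λ)`. -/
def Ikl (κ lam : Cardinal.{0}) : Set (Set (Set Ordinal.{0})) :=
  {A | A ⊆ smallSet κ lam ∧ ∃ a ∈ smallSet κ lam, ∀ b ∈ A, ¬ a ⊆ b}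

/-- A (`κ`-complete fine) ideal on `P_κ(λ)`. -/
structure IdealP (κ lam : Cardinal.{0}) where
  mem : Set (Set (Set Ordinal.{0}))
  subset_pk : ∀ A ∈ mem, A ⊆ smallSet κ lam
  fine : Ikl κ lam ⊆ mem
  subset_mem : ∀ A ∈ mem, ∀ B ⊆ A, B ∈ mem
  sUnion_mem : ∀ X : Set (Set (Set Ordinal.{0})), X ⊆ mem →
    #X < Cardinal.lift.{1} κ → ⋃₀ X ∈ mem
  ne_top : smallSet κ lam ∉ mem

/-- `H⁺` computed from the underlying collection `Hm` of an ideal on `P_κ(λ)`. -/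
def plusOf (κ lam : Cardinal.{0}) (Hm : Set (Set (Set Ordinal.{0}))) :
    Set (Set (Set Ordinal.{0})) :=
  {A | A ⊆ smallSet κ lam ∧ A ∉ Hm}

/-- `H⁺`. -/
def IdealP.plus {κ lam : Cardinal.{0}} (H : IdealP κ lam) : Set (Set (Set Ordinal.{0})) :=
  plusOf κ lam H.mem

/-- `cof(H)`. -/
def IdealP.cof {κ lam : Cardinal.{0}} (H : IdealP κ lam) : Cardinal.{0} :=
  leastCard fun X : Set (Set (Set Ordinal.{0})) =>
    X ⊆ H.mem ∧ ∀ A, A ∈ H.mem ↔ ∃ B ∈ X, A ⊆ B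

/-- `cof̄(H)`. -/
def IdealP.cofBar {κ lam : Cardinal.{0}} (H : IdealP κ lam) : Cardinal.{0} :=
  leastCard fun X : Set (Set (Set Ordinal.{0})) =>
    X ⊆ H.mem ∧ ∀ A ∈ H.mem, ∃ x ⊆ X, #x < Cardinal.lift.{1} κ ∧ A ⊆ ⋃₀ x

/-- `d^κ_{κ,λ}`. -/
def domP (κ lam : Cardinal.{0}) : Cardinal.{0} :=
  leastCard fun F : Set (Ordinal.{0} → Set Ordinal.{0}) =>
    (∀ f ∈ F, ∀ α < κ.ord, f α ∈ smallSet κ lam) ∧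
    ∀ g : Ordinal.{0} → Set Ordinal.{0}, (∀ α < κ.ord, g α ∈ smallSet κ lam) →
      ∃ f ∈ F, ∀ α < κ.ord, g α ⊆ f α

/-- A maximal almost disjoint family of size `≥ κ` for `H` (a member of `M_H^{≥κ}`). -/
def IsMad {κ lam : Cardinal.{0}} (H : IdealP κ lam) (Q : Set (Set (Set Ordinal.{0}))) : Prop :=
  Q ⊆ H.plus ∧ Cardinal.lift.{1} κ ≤ #Q ∧
  (∀ A ∈ Q, ∀ B ∈ Q, A ≠ B → A ∩ B ∈ H.mem) ∧
  ∀ C ∈ H.plus, ∃ A ∈ Q, A ∩ C ∈ H.plus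

/-- The (small) cardinal `c` with `lift c = c'`, used to pull `λ^{<κ} = |P_κ(λ)|` down. -/
def downCard (c : Cardinal.{1}) : Cardinal.{0} :=
  sInf {d : Cardinal.{0} | Cardinal.lift.{1} d = c}

open Classical in
/-- The number `a_H`. -/
def aNum {κ lam : Cardinal.{0}} (H : IdealP κ lam) : Cardinal.{0} :=
  if ∃ Q, IsMad H Q then sInf {c | ∃ Q, IsMad H Q ∧ Cardinal.lift.{1} c = #Q}
  else 2 ^ Order.succ (downCard #(smallSet κ lam))

/-- Weak `π`-point. -/
def WeakPiPoint {κ lam : Cardinal.{0}} (H : IdealP κ lam) : Prop :=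
  ∀ f : Ordinal.{0} → Set (Set Ordinal.{0}), (∀ α < κ.ord, f α ∈ H.mem) →
    ∀ A ∈ H.plus, ∃ B ∈ H.plus, B ⊆ A ∧ ∀ α < κ.ord, B ∩ f α ∈ Ikl κ lam

/-- `∪(a ∩ κ)`. -/
def supK (κ : Cardinal.{0}) (a : Set Ordinal.{0}) : Ordinal.{0} :=
  sSup (a ∩ Iio κ.ord)

/-- The relation `a ≺ b`. -/
def prec (κ : Cardinal.{0}) (a b : Set Ordinal.{0}) : Prop :=
  a ⊆ b ∧ supK κ a < supK κ b

/-- `[A]_κ²`. -/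
def pairsK (κ : Cardinal.{0}) (A : Set (Set Ordinal.{0})) : Set (Ordinal.{0} × Set Ordinal.{0}) :=
  {p | ∃ a ∈ A, ∃ b ∈ A, supK κ a < supK κ b ∧ p = (supK κ a, b)}

/-- `[A]_≺²`. -/
def pairsPrec (κ : Cardinal.{0}) (A : Set (Set Ordinal.{0})) :
    Set (Ordinal.{0} × Set Ordinal.{0}) :=
  {p | ∃ a ∈ A, ∃ b ∈ A, prec κ a b ∧ p = (supK κ a, b)}

/-- `[A]_{κ,κ}²`. -/
def pairsKK (κ : Cardinal.{0}) (A : Set (Set Ordinal.{0})) : Set (Ordinal.{0} × Ordinal.{0}) :=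
  {p | ∃ a ∈ A, ∃ b ∈ A, supK κ a < supK κ b ∧ p = (supK κ a, supK κ b)}

/-- `S` is a set of ordinals of order type `α`. -/
def OrdType (S : Set Ordinal.{0}) (α : Ordinal.{0}) : Prop :=
  ∃ e : Ordinal.{0} → Ordinal.{0},
    (∀ i < α, ∀ j < α, i < j → e i < e j) ∧ e '' Iio α = S

/-- `(B, ≺)` has order type `α`. -/
def OrdTypePrec (κ : Cardinal.{0}) (B : Set (Set Ordinal.{0})) (α : Ordinal.{0}) : Prop :=
  ∃ e : Ordinal.{0} → Set Ordinal.{0},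
    (∀ i < α, ∀ j < α, i < j → prec κ (e i) (e j)) ∧ e '' Iio α = B

/-- The partition relation `κ → (κ, θ)²`. -/
def ArrowKTheta (κ : Cardinal.{0}) (θ : Ordinal.{0}) : Prop :=
  ∀ f : Ordinal.{0} → Ordinal.{0} → Fin 2, ∃ A ⊆ Iio κ.ord,
    (OrdType A κ.ord ∧ ∀ α ∈ A, ∀ β ∈ A, α < β → f α β = 0) ∨
    (OrdType A θ ∧ ∀ α ∈ A, ∀ β ∈ A, α < β → f α β = 1)

/-- `κ` is weakly compact. -/
def WeaklyCompact (κ : Cardinal.{0}) : Prop :=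
  ∀ f : Ordinal.{0} → Ordinal.{0} → Fin 2, ∃ A ⊆ Iio κ.ord,
    OrdType A κ.ord ∧ ∃ i, ∀ α ∈ A, ∀ β ∈ A, α < β → f α β = i

/-- The partition relation `J⁺ → (J⁺, α)²` for an ideal on `κ`. -/
def ArrowJ {κ : Cardinal.{0}} (J : IdealK κ) (α : Ordinal.{0}) : Prop :=
  ∀ A ∈ J.plus, ∀ f : Ordinal.{0} → Ordinal.{0} → Fin 2,
    ∃ B ⊆ A, (B ∈ J.plus ∧ ∀ β ∈ B, ∀ γ ∈ B, β < γ → f β γ = 0) ∨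
             (OrdType B α ∧ ∀ β ∈ B, ∀ γ ∈ B, β < γ → f β γ = 1)

/-- The square bracket relation `J⁺ → [J⁺]_ρ²` for an ideal on `κ`. -/
def SqBrJ {κ : Cardinal.{0}} (J : IdealK κ) (ρ : Cardinal.{0}) : Prop :=
  ∀ A ∈ J.plus, ∀ f : Ordinal.{0} → Ordinal.{0} → Ordinal.{0},
    (∀ β ∈ A, ∀ γ ∈ A, β < γ → f β γ < ρ.ord) →
    ∃ B ∈ J.plus, B ⊆ A ∧ {ξ | ∃ β ∈ B, ∃ γ ∈ B, β < γ ∧ f β γ = ξ} ≠ Iio ρ.ord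

/-- `H⁺ →_κ (H⁺, α)²`. -/
def ArrowP (κ lam : Cardinal.{0}) (Hm : Set (Set (Set Ordinal.{0}))) (α : Ordinal.{0}) : Prop :=
  ∀ F : Ordinal.{0} → Set Ordinal.{0} → Fin 2, ∀ A ∈ plusOf κ lam Hm,
    ∃ B ⊆ A, (B ∈ plusOf κ lam Hm ∧ ∀ p ∈ pairsK κ B, F p.1 p.2 = 0) ∨
             (OrdTypePrec κ B α ∧ ∀ p ∈ pairsK κ B, F p.1 p.2 = 1)

/-- `H⁺ →_{κ,κ} (H⁺, α)²`. -/
def ArrowPKK (κ lam : Cardinal.{0}) (Hm : Set (Set (Set Ordinal.{0}))) (α : Ordinal.{0}) : Prop :=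
  ∀ F : Ordinal.{0} → Ordinal.{0} → Fin 2, ∀ A ∈ plusOf κ lam Hm,
    ∃ B ⊆ A, (B ∈ plusOf κ lam Hm ∧ ∀ p ∈ pairsKK κ B, F p.1 p.2 = 0) ∨
             (OrdTypePrec κ B α ∧ ∀ p ∈ pairsKK κ B, F p.1 p.2 = 1)

/-- `H⁺ →_{κ,κ} (H⁺; α)²`. -/
def ArrowPKKsemi (κ lam : Cardinal.{0}) (Hm : Set (Set (Set Ordinal.{0}))) (α : Ordinal.{0}) :
    Prop :=
  ∀ F : Ordinal.{0} → Ordinal.{0} → Fin 2, ∀ A ∈ plusOf κ lam Hm,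
    ∃ B ⊆ A, (B ∈ plusOf κ lam Hm ∧ ∀ p ∈ pairsKK κ B, F p.1 p.2 = 0) ∨
             (OrdType {o | ∃ a ∈ B, supK κ a = o} α ∧ ∀ p ∈ pairsKK κ B, F p.1 p.2 = 1)

/-- `H⁺ →_κ (H⁺)²`. -/
def ArrowPConst (κ lam : Cardinal.{0}) (Hm : Set (Set (Set Ordinal.{0}))) : Prop :=
  ∀ F : Ordinal.{0} → Set Ordinal.{0} → Fin 2, ∀ A ∈ plusOf κ lam Hm,
    ∃ B ∈ plusOf κ lam Hm, B ⊆ A ∧ ∃ i, ∀ p ∈ pairsK κ B, F p.1 p.2 = i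

/-- `H⁺ →_{κ,κ} [H⁺]_ρ²`. -/
def SqBrPKK (κ lam : Cardinal.{0}) (Hm : Set (Set (Set Ordinal.{0}))) (ρ : Cardinal.{0}) : Prop :=
  ∀ F : Ordinal.{0} → Ordinal.{0} → Ordinal.{0},
    (∀ α β : Ordinal.{0}, α < β → β < κ.ord → F α β < ρ.ord) →
    ∀ A ∈ plusOf κ lam Hm, ∃ B ∈ plusOf κ lam Hm, B ⊆ A ∧
      {ξ | ∃ p ∈ pairsKK κ B, F p.1 p.2 = ξ} ≠ Iio ρ.ord

/-- The class `K(κ,λ)`. -/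
def Kset (κ lam : Cardinal.{0}) : Set Cardinal.{0} :=
  {σ | lam ≤ σ ∧ ∃ T ⊆ smallSet κ lam, Cardinal.lift.{1} σ = #T ∧
    ∀ a ∈ smallSet κ lam, #{t ∈ T | t ⊆ a} < Cardinal.lift.{1} κ}

end

end PaperFormal

namespace PaperFormal

theorem aux_bound {K N : Type} [LinearOrder K] (hN : ℵ₀ ≤ #N) (hlt : #N < #K)
    (hI : ∀ a : K, #(Iic a) ≤ #N) {J : Type} (hJ : #J ≤ #N) (u : J → K) :
    ∃ c, ∀ j, u j < c := by
  have h1 : #(⋃ j, Iic (u j)) ≤ #N := by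
    refine (mk_iUnion_le _).trans ?_
    calc #J * (⨆ j, #(Iic (u j))) ≤ #N * #N := by
          gcongr
          exact ciSup_le' fun j => hI _
      _ = #N := mul_eq_self hN
  by_contra hc
  push Not at hc
  have h2 : (⋃ j, Iic (u j)) = Set.univ := by
    ext c
    simpa using hc c
  rw [h2, mk_univ] at h1
  exact absurd h1 (not_le.2 hlt)

/-- Pigeonhole: some fibre is unbounded. -/
theorem aux_pigeon {K N : Type} [LinearOrder K] (hN : ℵ₀ ≤ #N) (hlt : #N < #K)
    (hI : ∀ a : K, #(Iic a) ≤ #N) (φ : K → N) :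
    ∃ v, ∀ a, ∃ b, a ≤ b ∧ φ b = v := by
  by_contra hc
  push Not at hc
  choose u hu using hc
  obtain ⟨c, hc⟩ := aux_bound hN hlt hI le_rfl u
  exact hu (φ c) c (hc _).le rfl

theorem aux_closure {K N : Type} [LinearOrder K] [WellFoundedLT K] (hN : ℵ₀ ≤ #N) (hlt : #N < #K)
    (hI : ∀ a : K, #(Iic a) ≤ #N) (g : K → K) (a : K) :
    ∃ c, a < c ∧ ∀ b < c, g b < c := by
  have h1 : ∀ x : K, ∃ y, ∀ b ≤ x, g b < y := by
    intro x
    obtain ⟨c, hc⟩ := aux_bound hN hlt hI (hI x) (fun b => g b.1)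
    exact ⟨c, fun b hb => hc ⟨b, hb⟩⟩
  choose G hG using h1
  let s : ℕ → K := fun n => G^[n] a
  have hs : ∀ n, s (n + 1) = G (s n) := fun n => Function.iterate_succ_apply' G n a
  have h2 : ∃ c, ∀ n, s n < c := aux_bound hN hlt hI (by simpa using hN) s
  let S : Set K := {c | ∀ n, s n < c}
  have hS : S.Nonempty := h2
  let c := wellFounded_lt.min S hS
  have hc : ∀ n, s n < c := wellFounded_lt.min_mem S hS
  refine ⟨c, hc 0, fun b hb => ?_⟩
  have h3 : b ∉ S := fun h => wellFounded_lt.not_lt_min S h hb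
  simp only [S, mem_setOf_eq, not_forall, not_lt] at h3
  obtain ⟨n, hn⟩ := h3
  exact (hG _ _ hn).trans (hs n ▸ hc (n + 1))

theorem aux_surj {K N : Type} [LinearOrder K] [Nonempty K]
    (hI : ∀ a : K, #(Iic a) ≤ #N) :
    ∃ s : K → N → K, ∀ c, ∀ b ≤ c, ∃ n, s c n = b := by
  have : ∀ c : K, ∃ s : N → K, ∀ b ≤ c, ∃ n, s n = b := by
    intro c
    obtain ⟨e⟩ := hI c
    haveI : Nonempty (Iic c) := ⟨⟨c, le_rfl⟩⟩
    refine ⟨fun n => (Function.invFun e n).1, fun b hb => ⟨e ⟨b, hb⟩, ?_⟩⟩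
    exact congrArg Subtype.val (Function.leftInverse_invFun e.injective (⟨b, hb⟩ : Iic c))
  choose s hs using this
  exact ⟨s, hs⟩

/-- The uncoveredness hypothesis. -/
def Unc (lam : Cardinal.{0}) (K N : Type) [LinearOrder K] : Prop :=
  ∀ ι : Type, #ι ≤ lam → ∀ f : ι → K → K, ∃ g : K → K,
    ∀ J : Type, Nonempty J → #J ≤ #N → ∀ j : J → ι, ∃ a, ∀ n, f (j n) a ≤ g a

theorem aux_small {K N : Type} [LinearOrder K] [WellFoundedLT K] [Nonempty K]
    (hN : ℵ₀ ≤ #N) (hlt : #N < #K)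
    (hI : ∀ a : K, #(Iic a) ≤ #N) {lam : Cardinal.{0}} (hlam : #K ≤ lam) (H : Unc lam K N)
    {ι : Type} (hι : #ι ≤ lam) (φ : ι → K → N) : ∃ t : K → N, ∀ i, ∃ b, φ i b = t b := by
  haveI : Nonempty N := by
    rw [← mk_ne_zero_iff]; intro h; rw [h] at hN; exact absurd hN (not_le.2 aleph0_pos)
  have hlam0 : ℵ₀ ≤ lam := hN.trans (hlt.le.trans hlam)
  choose v hv using fun i => aux_pigeon hN hlt hI (φ i)
  choose nx hnx1 hnx2 using hv
  obtain ⟨g, hg⟩ := H (ι ⊕ K) (by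
    rw [mk_sum, lift_id, lift_id]
    exact add_le_of_le hlam0 hι hlam) (Sum.elim nx (fun b _ => b))
  choose cl0 hcl0 hcl0' using aux_closure hN hlt hI g
  let C : K → Set K := fun a => {c | a < c ∧ ∀ b < c, g b < c}
  have hC : ∀ a, (C a).Nonempty := fun a => ⟨cl0 a, hcl0 a, hcl0' a⟩
  let cl : K → K := fun a => wellFounded_lt.min (C a) (hC a)
  have hcl : ∀ a, cl a ∈ C a := fun a => wellFounded_lt.min_mem (C a) (hC a)
  have hcleq : ∀ a b, a ≤ b → b ≤ g a → cl b = cl a := by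
    intro a b hab hb
    have : C b = C a := by
      ext c
      refine ⟨fun h => ⟨hab.trans_lt h.1, h.2⟩, fun h => ⟨hb.trans_lt (h.2 a h.1), h.2⟩⟩
    simp only [cl, this]
  obtain ⟨s, hs⟩ := aux_surj hI
  have key : ∀ b, ∃ n, ∀ i, ∃ a, nx i a ≤ g a ∧ s (cl a) n = b := by
    intro b
    by_contra hc
    push Not at hc
    choose i hi using hc
    obtain ⟨a, ha⟩ := hg (Option N) inferInstance (by
      rw [mk_option]
      exact add_le_of_le hN le_rfl (one_le_aleph0.trans hN))
      (fun o => o.elim (Sum.inr b) (fun n => Sum.inl (i n)))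
    have hb : b ≤ g a := ha none
    have hb' : b < cl a := hb.trans_lt ((hcl a).2 a (hcl a).1)
    obtain ⟨n, hn⟩ := hs (cl a) b hb'.le
    exact hi n a (ha (some n)) hn
  choose n hn using key
  obtain ⟨m, hm⟩ := aux_pigeon hN hlt hI n
  have hD : #N ≤ #{b | n b = m} := by
    by_contra hc
    obtain ⟨c, hc⟩ := aux_bound hN hlt hI (not_le.1 hc).le (fun b : {b | n b = m} => b.1)
    obtain ⟨b, hb, hb'⟩ := hm c
    exact absurd (hc ⟨b, hb'⟩) (not_lt.2 hb)
  obtain ⟨k⟩ := hD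
  let k' : N → K := fun x => (k x).1
  have hk' : Function.Injective k' := fun x y h => k.injective (Subtype.ext h)
  refine ⟨fun b => Function.invFun k' (s (cl b) m), fun i => ?_⟩
  obtain ⟨a, ha, ha'⟩ := hn (k' (v i)) i
  have hkm : n (k' (v i)) = m := (k (v i)).2
  rw [hkm] at ha'
  refine ⟨nx i a, ?_⟩
  change φ i (nx i a) = Function.invFun k' (s (cl (nx i a)) m)
  rw [hcleq a _ (hnx1 i a) ha, ha', hnx2]
  exact (Function.leftInverse_invFun hk' _).symm

theorem aux_main {K N : Type} [LinearOrder K] [WellFoundedLT K] [Nonempty K]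
    (hN : ℵ₀ ≤ #N) (hlt : #N < #K)
    (hI : ∀ a : K, #(Iic a) ≤ #N) {lam : Cardinal.{0}} (hlam : #K ≤ lam) (H : Unc lam K N)
    {ι : Type} (hι : #ι ≤ lam) (F : ι → K → K) : ∃ h : K → K, ∀ i, ∃ b, F i b = h b := by
  have hlam0 : ℵ₀ ≤ lam := hN.trans (hlt.le.trans hlam)
  have hKK : #(K × K) = #K := by
    rw [mk_prod, lift_id, mul_eq_self (hN.trans hlt.le)]
  obtain ⟨p⟩ := Cardinal.eq.1 hKK
  obtain ⟨g, hg⟩ := H (ι × K) (by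
    rw [mk_prod, lift_id, lift_id]
    exact mul_le_of_le hlam0 hι hlam) (fun q a => F q.1 (p (a, q.2)))
  obtain ⟨s, hs⟩ := aux_surj hI
  have key : ∀ i β, ∃ n a, s (g a) n = F i (p (a, β)) := by
    intro i β
    obtain ⟨a, ha⟩ := hg Unit inferInstance (by
      simpa using one_le_aleph0.trans hN) (fun _ => (i, β))
    obtain ⟨n, hn⟩ := hs (g a) _ (ha ())
    exact ⟨n, a, hn⟩
  choose n a hna using key
  obtain ⟨t, ht⟩ := aux_small hN hlt hI hlam H hι n
  refine ⟨fun x => s (g (p.symm x).1) (t (p.symm x).2), fun i => ?_⟩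
  obtain ⟨β, hβ⟩ := ht i
  refine ⟨p (a i β, β), ?_⟩
  simp only [Equiv.symm_apply_apply]
  rw [← hβ, hna]

open Classical in
/-- Coding of a function on `κ.ord.ToType`. -/
noncomputable def extFun (κ : Cardinal.{0}) (f : κ.ord.ToType → κ.ord.ToType) :
    Ordinal.{0} → Ordinal.{0} :=
  fun o => if h : o < κ.ord then (f (Ordinal.ToType.mk ⟨o, h⟩)).toOrd.1 else 0

theorem extFun_mem (κ : Cardinal.{0}) (f : κ.ord.ToType → κ.ord.ToType) :
    extFun κ f ∈ funOn κ := by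
  intro o ho
  simp only [extFun, ho, dif_pos]
  exact (f (Ordinal.ToType.mk ⟨o, ho⟩)).toOrd.2

theorem extFun_apply (κ : Cardinal.{0}) (f : κ.ord.ToType → κ.ord.ToType) (a : κ.ord.ToType) :
    extFun κ f a.toOrd.1 = (f a).toOrd.1 := by
  have h : a.toOrd.1 < κ.ord := a.toOrd.2
  unfold extFun
  rw [dif_pos h]
  exact congrArg (fun x => (f x).toOrd.1) (Ordinal.ToType.mk.apply_symm_apply a)

/-- Restriction of a coded function. -/
noncomputable def resFun (κ : Cardinal.{0}) (f : Ordinal.{0} → Ordinal.{0}) (hf : f ∈ funOn κ) :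
    κ.ord.ToType → κ.ord.ToType :=
  fun a => Ordinal.ToType.mk ⟨f a.toOrd.1, hf _ a.toOrd.2⟩

theorem resFun_apply (κ : Cardinal.{0}) (f : Ordinal.{0} → Ordinal.{0}) (hf : f ∈ funOn κ)
    (a : κ.ord.ToType) : (resFun κ f hf a).toOrd.1 = f a.toOrd.1 := by
  simp [resFun]

theorem unc_of_lt (ν κ lam : Cardinal.{0}) (hκ : κ = Order.succ ν) (hlam : lam < domBar κ)
    (N : Type) (hN : #N = ν) : Unc lam κ.ord.ToType N := by
  intro ι hι f
  let X : Set (Ordinal.{0} → Ordinal.{0}) := range fun i => extFun κ (f i)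
  have hX : #X ≤ Cardinal.lift.{1} #ι := by
    have := mk_range_le_lift (f := fun i => extFun κ (f i))
    simpa using this
  obtain ⟨c, hc⟩ := mem_range_lift_of_le hX
  have hcl : c ≤ lam := by
    rw [← hc, lift_le] at hX
    exact hX.trans hι
  have hXP : ¬ (X ⊆ funOn κ ∧
    ∀ g ∈ funOn κ, ∃ x ⊆ X, x.Nonempty ∧ #x < Cardinal.lift.{1} κ ∧
      ∀ α < κ.ord, g α < sSup {o | ∃ f ∈ x, f α = o}) := by
    intro h
    have : domBar κ ≤ c := csInf_le' ⟨X, h, hc⟩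
    exact absurd (this.trans hcl) (not_le.2 hlam)
  have hXs : X ⊆ funOn κ := by
    rintro _ ⟨i, rfl⟩
    exact extFun_mem _ _
  rw [not_and] at hXP
  have h2 := hXP hXs
  push Not at h2
  obtain ⟨g, hg, h3⟩ := h2
  refine ⟨resFun κ g hg, fun J hJ hJN j => ?_⟩
  obtain ⟨α, hα, h4⟩ := h3 (range fun n => extFun κ (f (j n)))
    (by rintro _ ⟨n, rfl⟩; exact ⟨j n, rfl⟩) (range_nonempty _) (by
      have := mk_range_le_lift (f := fun n => extFun κ (f (j n)))
      have h5 : #(range fun n => extFun κ (f (j n))) ≤ Cardinal.lift.{1} #J := by simpa using this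
      refine h5.trans_lt ?_
      rw [lift_lt, hκ, Order.lt_succ_iff, ← hN]
      exact hJN)
  refine ⟨Ordinal.ToType.mk ⟨α, hα⟩, fun n => ?_⟩
  have h6 : extFun κ (f (j n)) α ≤ g α := by
    have hmem : extFun κ (f (j n)) α ∈
        {o | ∃ f' ∈ range (fun n => extFun κ (f (j n))), f' α = o} := ⟨_, ⟨n, rfl⟩, rfl⟩
    have hbdd : BddAbove {o | ∃ f' ∈ range (fun n => extFun κ (f (j n))), f' α = o} := by
      refine ⟨κ.ord, ?_⟩
      rintro _ ⟨_, ⟨m, rfl⟩, rfl⟩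
      exact (extFun_mem κ _ α hα).le
    exact (le_csSup hbdd hmem).trans h4
  have h7 := extFun_apply κ (f (j n)) (Ordinal.ToType.mk ⟨α, hα⟩)
  have h8 := resFun_apply κ g hg (Ordinal.ToType.mk ⟨α, hα⟩)
  rw [← Ordinal.ToType.mk.symm.le_iff_le]
  change (Ordinal.ToType.toOrd _).1 ≤ (Ordinal.ToType.toOrd _).1
  rw [← h7, h8]
  simpa using h6

/-- If `κ` is the successor of an infinite cardinal, then `U_κ ≥ d̄_κ`. -/
theorem uneq_ge_domBar (ν κ : Cardinal.{0}) (hν : ℵ₀ ≤ ν) (hκ : κ = Order.succ ν) :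
    domBar κ ≤ uneq κ := by
  have hνκ : ν < κ := hκ ▸ Order.lt_succ ν
  have hK0 : Nonempty κ.ord.ToType := by
    rw [← mk_ne_zero_iff, mk_ord_toType]
    exact (pos_of_gt hνκ).ne'
  have hne : {c : Cardinal.{0} | ∃ F : Set (Ordinal.{0} → Ordinal.{0}), (F ⊆ funOn κ ∧
    ∀ g ∈ funOn κ, ∃ f ∈ F, {α | α < κ.ord ∧ f α = g α} = ∅) ∧
      Cardinal.lift.{1} c = #F}.Nonempty := by
    let X : Set (Ordinal.{0} → Ordinal.{0}) := range (extFun κ)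
    have hX : #X ≤ Cardinal.lift.{1} #(κ.ord.ToType → κ.ord.ToType) := by
      have := mk_range_le_lift (f := extFun κ)
      simpa using this
    obtain ⟨c, hc⟩ := mem_range_lift_of_le hX
    refine ⟨c, X, ⟨?_, fun g hg => ?_⟩, hc⟩
    · rintro _ ⟨i, rfl⟩
      exact extFun_mem _ _
    · haveI : Nontrivial κ.ord.ToType := by
        rw [← one_lt_iff_nontrivial, mk_ord_toType]
        exact one_lt_aleph0.trans_le (hν.trans hνκ.le)
      choose d hd using fun a : κ.ord.ToType => exists_ne a
      refine ⟨_, ⟨fun a => d (resFun κ g hg a), rfl⟩, ?_⟩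
      rw [eq_empty_iff_forall_notMem]
      rintro α ⟨hα, h⟩
      have h7 := extFun_apply κ (fun a => d (resFun κ g hg a)) (Ordinal.ToType.mk ⟨α, hα⟩)
      have h8 := resFun_apply κ g hg (Ordinal.ToType.mk ⟨α, hα⟩)
      simp only [Ordinal.ToType.toOrd, OrderIso.symm_apply_apply] at h7 h8
      rw [h, ← h8] at h7
      exact hd _ (Ordinal.ToType.mk.symm.injective (Subtype.ext h7)).symm
  obtain ⟨F, ⟨hF, hFU⟩, hcard⟩ := csInf_mem hne
  change Cardinal.lift.{1} (uneq κ) = #F at hcard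
  by_contra hcon
  rw [not_le] at hcon
  obtain ⟨e⟩ : Nonempty ((uneq κ).out ≃ F) := by
    rw [← lift_mk_eq.{0, 1, 1}]
    simpa using hcard
  let f : (uneq κ).out → κ.ord.ToType → κ.ord.ToType := fun i => resFun κ (e i).1 (hF (e i).2)
  have hit : ¬ ∃ h : κ.ord.ToType → κ.ord.ToType, ∀ i, ∃ b, f i b = h b := by
    rintro ⟨h, hh⟩
    obtain ⟨f', hf', h0⟩ := hFU (extFun κ h) (extFun_mem κ h)
    obtain ⟨b, hb⟩ := hh (e.symm ⟨f', hf'⟩)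
    have h1 := resFun_apply κ _ (hF (e (e.symm ⟨f', hf'⟩)).2) b
    have h2 : b.toOrd.1 ∈ {α | α < κ.ord ∧ f' α = extFun κ h α} := by
      refine ⟨b.toOrd.2, ?_⟩
      rw [extFun_apply, ← hb]
      simp only [f]
      rw [h1]
      simp
    rw [h0] at h2
    exact h2
  have hmk : #(uneq κ).out = uneq κ := mk_out _
  rcases le_total (uneq κ) κ with hle | hle
  · have : #(uneq κ).out ≤ #κ.ord.ToType := by rw [hmk, mk_ord_toType]; exact hle
    obtain ⟨k⟩ := this
    refine hit ⟨fun b => Function.extend k (fun i => f i b) (fun _ => b) b, fun i => ⟨k i, ?_⟩⟩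
    simp [k.injective.extend_apply]
  · have hN : #ν.out = ν := mk_out _
    refine hit (aux_main (N := ν.out) (lam := uneq κ) ?_ ?_ ?_ ?_
      (unc_of_lt ν κ _ hκ hcon _ hN) hmk.le f)
    · rw [hN]; exact hν
    · rw [hN, mk_ord_toType]; exact hνκ
    · intro a
      rw [hN, ← Order.lt_succ_iff, ← hκ]
      have h1 : #(Iio a) < κ := mk_Iio_toType_ord_lt a
      rw [← Iio_insert]
      refine mk_insert_le.trans_lt ?_
      exact add_lt_of_lt (hν.trans hνκ.le) h1 (one_lt_aleph0.trans_le (hν.trans hνκ.le))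
    · rw [mk_ord_toType]; exact hle

end PaperFormal
end

section
/- Suppose θ is an infinite cardinal < κ such that κ → (κ, θ)². Then H⁺ →_κ (H⁺, θ+1)² for every ideal H on P_κ(λ) with cof(H) < cov(M_{κ,κ}). -/
open Cardinal Set

namespace PaperFormal

lemma bound_of_small {τ : Cardinal.{0}} (hτ : τ.IsRegular) {s : Set Ordinal.{0}}
    (hs : s ⊆ Iio τ.ord) (hc : #s < Cardinal.lift.{1} τ) :
    sSup s < τ.ord := by
  apply Ordinal.sSup_lt_of_lt_cof
  · rw [← Ordinal.lift_cof, hτ.cof_ord]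
    exact hc
  · exact fun i hi => hs hi

lemma bdd_ord (s : Set Ordinal.{0}) (o : Ordinal.{0}) : BddAbove (s ∩ Iio o) :=
  ⟨o, fun _ hx => le_of_lt hx.2⟩

lemma exists_bound {τ : Cardinal.{0}} (hτ : τ.IsRegular) {s : Set Ordinal.{0}}
    (hs : s ⊆ Iio τ.ord) (hc : #s < Cardinal.lift.{1} τ) :
    ∃ γ < τ.ord, ∀ x ∈ s, x ≤ γ :=
  ⟨sSup s, bound_of_small hτ hs hc, fun x hx =>
    le_csSup ⟨τ.ord, fun _ hy => le_of_lt (hs hy)⟩ hx⟩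

lemma mk_Iio_lt {τ : Cardinal.{0}} {o : Ordinal.{0}} (ho : o < τ.ord) :
    #(Iio o) < Cardinal.lift.{1} τ := by
  rw [Cardinal.mk_Iio_ordinal]
  exact Cardinal.lift_lt.2 (Cardinal.lt_ord.1 ho)

lemma exists_bound_fun {τ : Cardinal.{0}} (hτ : τ.IsRegular) {i : Ordinal.{0}} (hi : i < τ.ord)
    (g : Ordinal.{0} → Ordinal.{0}) (hg : ∀ j < i, g j < τ.ord) :
    ∃ γ < τ.ord, ∀ j < i, g j ≤ γ := by
  obtain ⟨γ, h1, h2⟩ := exists_bound hτ (s := g '' Iio i)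
    (by rintro _ ⟨j, hj, rfl⟩; exact hg j hj)
    (lt_of_le_of_lt Cardinal.mk_image_le (mk_Iio_lt hi))
  exact ⟨γ, h1, fun j hj => h2 _ ⟨j, hj, rfl⟩⟩

lemma succ_lt_ord {τ : Cardinal.{0}} (hτ : ℵ₀ ≤ τ) {o : Ordinal.{0}} (ho : o < τ.ord) :
    o + 1 < τ.ord := by
  have := (Cardinal.isSuccLimit_ord hτ).succ_lt ho
  simpa using this

/-- Coordinatewise stabilization. -/
lemma stab_all {τ : Cardinal.{0}} (hτ : τ.IsRegular) {i : Ordinal.{0}} (hi : i < τ.ord)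
    (y : Ordinal.{0} → Ordinal.{0} → Ordinal.{0})
    (hst : ∀ j < i, ∀ η₀ < τ.ord,
      (∀ η, η₀ ≤ η → η < τ.ord → ∀ η', η₀ ≤ η' → η' < τ.ord → ∀ k < j, y η k = y η' k) →
      ∃ η, η < τ.ord ∧ ∀ η', η ≤ η' → η' < τ.ord → y η' j = y η j) :
    ∃ η < τ.ord, ∀ η', η ≤ η' → η' < τ.ord → ∀ j < i, y η' j = y η j := by
  have key : ∀ j, j < i → ∃ η < τ.ord, ∀ η', η ≤ η' → η' < τ.ord → y η' j = y η j := by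
    intro j
    induction j using WellFoundedLT.induction with
    | ind j ih =>
      intro hj
      have ih' : ∀ k, ∃ η, k < j → η < τ.ord ∧
          ∀ η', η ≤ η' → η' < τ.ord → y η' k = y η k := by
        intro k
        by_cases hk : k < j
        · obtain ⟨η, h⟩ := ih k hk (hk.trans hj)
          exact ⟨η, fun _ => h⟩
        · exact ⟨0, fun h => absurd h hk⟩
      choose g hg using ih'
      obtain ⟨γ, hγ, hγ'⟩ := exists_bound_fun hτ (hj.trans hi) g (fun k hk => (hg k hk).1)
      refine hst j hj γ hγ ?_
      intro η h1 h2 η' h3 h4 k hk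
      rw [(hg k hk).2 η ((hγ' k hk).trans h1) h2, (hg k hk).2 η' ((hγ' k hk).trans h3) h4]
  have key' : ∀ k, ∃ η, k < i → η < τ.ord ∧
      ∀ η', η ≤ η' → η' < τ.ord → y η' k = y η k := by
    intro k
    by_cases hk : k < i
    · obtain ⟨η, h⟩ := key k hk
      exact ⟨η, fun _ => h⟩
    · exact ⟨0, fun h => absurd h hk⟩
  choose g hg using key'
  obtain ⟨γ, hγ, hγ'⟩ := exists_bound_fun hτ hi g (fun k hk => (hg k hk).1)
  refine ⟨γ, hγ, fun η' h1 h2 j hj => ?_⟩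
  rw [(hg j hj).2 η' ((hγ' j hj).trans h1) h2, (hg j hj).2 γ (hγ' j hj) hγ]

/-- Strict lexicographic order on sequences of length `i`. -/
def lexLt (i : Ordinal.{0}) (u v : Ordinal.{0} → Ordinal.{0}) : Prop :=
  ∃ j < i, (∀ k < j, u k = v k) ∧ u j < v j

lemma lexLt_or {i : Ordinal.{0}} {u v : Ordinal.{0} → Ordinal.{0}} (h : ∃ j < i, u j ≠ v j) :
    lexLt i u v ∨ lexLt i v u := by
  classical
  obtain ⟨j, ⟨hj, hne⟩, hmin⟩ :=
    WellFounded.has_min (wellFounded_lt (α := Ordinal.{0})) {j | j < i ∧ u j ≠ v j} h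
  have hk : ∀ k < j, u k = v k := by
    intro k hk
    by_contra hc
    exact hmin k ⟨hk.trans hj, hc⟩ hk
  rcases lt_or_gt_of_ne hne with h | h
  · exact Or.inl ⟨j, hj, hk, h⟩
  · exact Or.inr ⟨j, hj, fun k h' => (hk k h').symm, h⟩

lemma lexLt_le {i j : Ordinal.{0}} {u v : Ordinal.{0} → Ordinal.{0}} (h : lexLt i u v)
    (hk : ∀ k < j, u k = v k) : u j ≤ v j := by
  obtain ⟨l, hl, h1, h2⟩ := h
  rcases lt_trichotomy l j with h | h | h
  · exact absurd (hk l h) h2.ne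
  · subst h; exact h2.le
  · exact (h1 j h).le

lemma power_lt {κ θ μ : Cardinal.{0}} (hreg : κ.IsRegular) (hθ : ℵ₀ ≤ θ) (hθκ : θ < κ)
    (harrow : ArrowKTheta κ θ.ord) (hμ : μ < κ) {i : Ordinal.{0}} (hi : i < θ.ord) :
    μ ^ i.card < κ := by
  classical
  by_contra hcon
  rw [not_lt] at hcon
  have hle : #(Iio κ.ord) ≤ #(Iio i → Iio μ.ord) := by
    rw [Cardinal.mk_Iio_ordinal, Cardinal.card_ord, Cardinal.mk_pi]
    simp only [Cardinal.mk_Iio_ordinal, Cardinal.prod_const, Cardinal.card_ord, Cardinal.lift_id]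
    rw [← Cardinal.lift_power]
    exact Cardinal.lift_le.2 hcon
  obtain ⟨φ⟩ := hle
  let x : Ordinal.{0} → Ordinal.{0} → Ordinal.{0} := fun α k =>
    if h : α < κ.ord ∧ k < i then (φ ⟨α, h.1⟩ ⟨k, h.2⟩).1 else 0
  have hx1 : ∀ α < κ.ord, ∀ k < i, x α k < μ.ord := by
    intro α hα k hk
    simp only [x, hα, hk, and_self, dif_pos]
    exact (φ ⟨α, hα⟩ ⟨k, hk⟩).2
  have hx2 : ∀ α < κ.ord, ∀ β < κ.ord, α ≠ β → ∃ k < i, x α k ≠ x β k := by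
    intro α hα β hβ hne
    by_contra hc
    push Not at hc
    apply hne
    have : φ ⟨α, hα⟩ = φ ⟨β, hβ⟩ := by
      funext ⟨k, hk⟩
      have := hc k hk
      simp only [x, hα, hβ, show k < i from hk, and_self, dif_pos] at this
      exact Subtype.ext this
    exact congrArg Subtype.val (φ.injective this)
  obtain ⟨A, hA, h | h⟩ := harrow (fun α β => if lexLt i (x β) (x α) then 1 else 0)
  · obtain ⟨⟨e, he, rfl⟩, h0⟩ := h
    have heK : ∀ η < κ.ord, e η < κ.ord := fun η hη => hA ⟨η, hη, rfl⟩
    have hlex : ∀ η < κ.ord, ∀ η' < κ.ord, η < η' → lexLt i (x (e η)) (x (e η')) := by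
      intro η h1 η' h2 h12
      have hlt := he η h1 η' h2 h12
      have := h0 _ ⟨η, h1, rfl⟩ _ ⟨η', h2, rfl⟩ hlt
      have hn : ¬ lexLt i (x (e η')) (x (e η)) := by
        intro hc
        simp [hc] at this
      rcases lexLt_or (hx2 _ (heK η h1) _ (heK η' h2) hlt.ne) with h | h
      · exact h
      · exact absurd h hn
    have hiκ : i < κ.ord := hi.trans (Cardinal.ord_lt_ord.2 hθκ)
    obtain ⟨η, hη, hs⟩ := stab_all hreg hiκ (fun η => x (e η)) (by
      intro j hj η₀ hη₀ hag
      have hmono : ∀ η, η₀ ≤ η → η < κ.ord → ∀ η', η ≤ η' → η' < κ.ord →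
          x (e η) j ≤ x (e η') j := by
        intro η h1 h2 η' h3 h4
        rcases h3.eq_or_lt with rfl | h3'
        · exact le_rfl
        · exact lexLt_le (hlex η h2 η' h4 h3') (hag η h1 h2 η' (h1.trans h3) h4)
      have : ∀ v, ∃ η, (∃ η, η₀ ≤ η ∧ η < κ.ord ∧ v < x (e η) j) →
          η₀ ≤ η ∧ η < κ.ord ∧ v < x (e η) j := by
        intro v
        by_cases hv : ∃ η, η₀ ≤ η ∧ η < κ.ord ∧ v < x (e η) j
        · obtain ⟨η, h⟩ := hv
          exact ⟨η, fun _ => h⟩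
        · exact ⟨0, fun h => absurd h hv⟩
      choose g hg using this
      obtain ⟨γ, hγ, hγ'⟩ := exists_bound_fun hreg (Cardinal.ord_lt_ord.2 hμ)
        (fun v => if g v < κ.ord then g v else 0) (by
          intro v _
          split_ifs with h
          · exact h
          · exact lt_of_le_of_lt (zero_le) hη₀)
      refine ⟨max γ η₀, max_lt hγ hη₀, fun η' h1 h2 => ?_⟩
      refine le_antisymm ?_ (hmono _ (le_max_right _ _) (max_lt hγ hη₀) η' h1 h2)
      by_contra hc
      rw [not_le] at hc
      obtain ⟨a1, a2, a3⟩ := hg (x (e (max γ η₀)) j) ⟨η', (le_max_right _ _).trans h1, h2, hc⟩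
      have := hγ' (x (e (max γ η₀)) j) (hx1 _ (heK _ (max_lt hγ hη₀)) j hj)

      rw [if_pos a2] at this
      exact absurd (hmono _ a1 a2 (max γ η₀) (this.trans (le_max_left _ _)) (max_lt hγ hη₀))
        (not_le.2 a3))
    have hη1 := succ_lt_ord hreg.aleph0_le hη
    have hlt : η < η + 1 := lt_add_one η
    obtain ⟨k, hk, hne⟩ := hx2 _ (heK _ hη) _ (heK _ hη1) (he η hη _ hη1 hlt).ne
    exact hne (hs (η + 1) hlt.le hη1 k hk).symm
  · obtain ⟨⟨e, he, rfl⟩, h1⟩ := h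
    obtain ⟨τ, hτ, hiτ, hτθ⟩ : ∃ τ : Cardinal.{0}, τ.IsRegular ∧ i < τ.ord ∧ τ ≤ θ := by
      by_cases hf : i.card < ℵ₀
      · exact ⟨ℵ₀, Cardinal.isRegular_aleph0, Cardinal.lt_ord.2 hf, hθ⟩
      · exact ⟨Order.succ i.card, Cardinal.isRegular_succ (not_lt.1 hf),
          Cardinal.lt_ord.2 (Order.lt_succ _), Order.succ_le_of_lt (Cardinal.lt_ord.1 hi)⟩
    have hsub : ∀ η < τ.ord, η < θ.ord := fun η h => lt_of_lt_of_le h (Cardinal.ord_le_ord.2 hτθ)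
    have heK : ∀ η < τ.ord, e η < κ.ord := fun η hη => hA ⟨η, hsub η hη, rfl⟩
    have hlex : ∀ η < τ.ord, ∀ η' < τ.ord, η < η' → lexLt i (x (e η')) (x (e η)) := by
      intro η a1 η' a2 h12
      have := h1 _ ⟨η, hsub _ a1, rfl⟩ _ ⟨η', hsub _ a2, rfl⟩
        (he η (hsub _ a1) η' (hsub _ a2) h12)
      by_contra hc
      simp [hc] at this
    obtain ⟨η, hη, hs⟩ := stab_all hτ hiτ (fun η => x (e η)) (by
      intro j hj η₀ hη₀ hag
      have hmono : ∀ η, η₀ ≤ η → η < τ.ord → ∀ η', η ≤ η' → η' < τ.ord →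
          x (e η') j ≤ x (e η) j := by
        intro η h1 h2 η' h3 h4
        rcases h3.eq_or_lt with rfl | h3'
        · exact le_rfl
        · exact lexLt_le (hlex η h2 η' h4 h3') (hag η' (h1.trans h3) h4 η h1 h2)
      obtain ⟨v, ⟨η, b1, b2, rfl⟩, hmin⟩ :=
        WellFounded.has_min (wellFounded_lt (α := Ordinal.{0}))
          {v | ∃ η, η₀ ≤ η ∧ η < τ.ord ∧ x (e η) j = v} ⟨_, η₀, le_rfl, hη₀, rfl⟩
      refine ⟨η, b2, fun η' c1 c2 => le_antisymm (hmono η b1 b2 η' c1 c2) ?_⟩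
      exact not_lt.1 (hmin _ ⟨η', b1.trans c1, c2, rfl⟩))
    have hη1 := succ_lt_ord hτ.aleph0_le hη
    have hlt : η < η + 1 := lt_add_one η
    obtain ⟨k, hk, hne⟩ := hx2 _ (heK _ hη) _ (heK _ hη1)
      (he η (hsub _ hη) _ (hsub _ hη1) hlt).ne
    exact hne (hs (η + 1) hlt.le hη1 k hk).symm

lemma fun_card_lt {κ θ : Cardinal.{0}} (hreg : κ.IsRegular) (hθ : ℵ₀ ≤ θ) (hθκ : θ < κ)
    (harrow : ArrowKTheta κ θ.ord) {i : Ordinal.{0}} (hi : i < θ.ord)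
    {α : Type 1} (hα : #α < Cardinal.lift.{1} κ) :
    #(Iio i → α) < Cardinal.lift.{1} κ := by
  obtain ⟨μ, hμ⟩ := Cardinal.mem_range_lift_of_le hα.le
  rw [← hμ, Cardinal.lift_lt] at hα
  have := power_lt hreg hθ hθκ harrow hα hi
  rw [← Cardinal.power_def, Cardinal.mk_Iio_ordinal, ← hμ, ← Cardinal.lift_power]
  exact Cardinal.lift_lt.2 this

end PaperFormal

namespace PaperFormal

lemma generic_exists {κ lam : Cardinal.{0}} (hκ : ℵ₀ ≤ κ) (H : IdealP κ lam)
    (hcof : H.cof < covM κ κ) :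
    ∃ X ⊆ H.mem, (∀ A ∈ H.mem, ∃ B ∈ X, A ⊆ B) ∧
      ∀ D : Set (Set Ordinal.{0}) → Set (Set Ordinal.{0}),
        (∀ B ∈ X, DenseOpen κ κ (D B)) → ∃ x ∈ cantor κ, ∀ B ∈ X, x ∈ D B := by
  have hne : {c : Cardinal.{0} | ∃ F : Set (Set (Set Ordinal.{0})),
      (F ⊆ H.mem ∧ ∀ A, A ∈ H.mem ↔ ∃ B ∈ F, A ⊆ B) ∧ Cardinal.lift.{1} c = #F}.Nonempty := by
    have hle : #H.mem ≤ Cardinal.lift.{1} ((2 : Cardinal.{0}) ^ ((2 : Cardinal.{0}) ^ lam)) := by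
      have h1 : H.mem ⊆ 𝒫 (𝒫 (Iio lam.ord)) := by
        intro A hA a ha
        exact (H.subset_pk A hA ha).1
      refine (Cardinal.mk_le_mk_of_subset h1).trans ?_
      simp [Cardinal.mk_powerset, Cardinal.mk_Iio_ordinal]
    obtain ⟨c, hc⟩ := Cardinal.mem_range_lift_of_le hle
    refine ⟨c, H.mem, ⟨subset_rfl, fun A => ⟨fun hA => ⟨A, hA, subset_rfl⟩, ?_⟩⟩, hc⟩
    rintro ⟨B, hB, hAB⟩
    exact H.subset_mem B hB A hAB
  obtain ⟨X, ⟨hX1, hX2⟩, hX3⟩ := csInf_mem hne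
  change Cardinal.lift.{1} H.cof = #X at hX3
  refine ⟨X, hX1, fun A hA => (hX2 A).1 hA, fun D hD => ?_⟩
  by_contra hcon
  push Not at hcon
  let Y : Set (Set (Set Ordinal.{0})) := (fun B => cantor κ \ D B) '' X
  have hYc : #Y ≤ Cardinal.lift.{1} H.cof := by
    rw [hX3]
    exact Cardinal.mk_image_le
  obtain ⟨c, hc⟩ := Cardinal.mem_range_lift_of_le hYc
  have hcle : c ≤ H.cof := by
    rw [← hc] at hYc
    exact Cardinal.lift_le.1 hYc
  have : covM κ κ ≤ c := by
    apply csInf_le (OrderBot.bddBelow _)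
    refine ⟨Y, ⟨?_, ?_⟩, hc⟩
    · rintro _ ⟨B, hB, rfl⟩
      refine ⟨sdiff_subset, {D B}, singleton_nonempty _, ?_, ?_, ?_⟩
      · rw [Cardinal.mk_singleton]
        have : (1 : Cardinal.{0}) ≤ κ := (Cardinal.one_le_aleph0).trans hκ
        simpa using this
      · rintro _ rfl
        exact hD B hB
      · rw [sInter_singleton]
        exact sdiff_inter_self
    · apply Subset.antisymm
      · rintro x ⟨_, ⟨B, hB, rfl⟩, hx⟩
        exact hx.1
      · intro x hx
        obtain ⟨B, hB, hxB⟩ := hcon x hx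
        exact ⟨_, ⟨B, hB, rfl⟩, hx, hxB⟩
  exact absurd (this.trans hcle) (not_le.2 hcof)

lemma supK_lt {κ lam : Cardinal.{0}} (hreg : κ.IsRegular) {b : Set Ordinal.{0}}
    (hb : b ∈ smallSet κ lam) : supK κ b < κ.ord :=
  bound_of_small hreg inter_subset_right
    (lt_of_le_of_lt (Cardinal.mk_le_mk_of_subset inter_subset_left) hb.2)

lemma le_supK {κ : Cardinal.{0}} {b : Set Ordinal.{0}} {ξ : Ordinal.{0}} (h : ξ ∈ b)
    (hξ : ξ < κ.ord) : ξ ≤ supK κ b :=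
  le_csSup (bdd_ord _ _) ⟨h, hξ⟩

lemma biUnion_mem {κ lam : Cardinal.{0}} (H : IdealP κ lam) {ι : Type 1} {I : Set ι}
    (hI : #I < Cardinal.lift.{1} κ) {N : ι → Set (Set Ordinal.{0})}
    (hN : ∀ i ∈ I, N i ∈ H.mem) : (⋃ i ∈ I, N i) ∈ H.mem := by
  have := H.sUnion_mem (N '' I) (by rintro _ ⟨i, hi, rfl⟩; exact hN i hi)
    (lt_of_le_of_lt Cardinal.mk_image_le hI)
  rwa [sUnion_image] at this

lemma union_mem {κ lam : Cardinal.{0}} (hκ : ℵ₀ ≤ κ) (H : IdealP κ lam)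
    {M N : Set (Set Ordinal.{0})} (hM : M ∈ H.mem) (hN : N ∈ H.mem) : M ∪ N ∈ H.mem := by
  have := H.sUnion_mem {M, N} (by rintro _ (rfl | rfl) <;> assumption)
    (lt_of_lt_of_le ((Cardinal.lt_aleph0_iff_finite).2 (Set.toFinite ({M, N} : Set _)))
      (by simpa using hκ))
  rwa [sUnion_pair] at this

lemma not_superset_mem {κ lam : Cardinal.{0}} (H : IdealP κ lam) {a : Set Ordinal.{0}}
    (ha : a ∈ smallSet κ lam) : {b ∈ smallSet κ lam | ¬ a ⊆ b} ∈ H.mem :=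
  H.fine ⟨fun _ h => h.1, a, ha, fun _ h => h.2⟩

lemma supK_le_mem {κ lam : Cardinal.{0}} (hκ : ℵ₀ ≤ κ) (hlt : κ < lam) (H : IdealP κ lam)
    {γ : Ordinal.{0}} (hγ : γ < κ.ord) : {b ∈ smallSet κ lam | supK κ b ≤ γ} ∈ H.mem := by
  have hγ1 := succ_lt_ord hκ hγ
  have hs : ({γ + 1} : Set Ordinal.{0}) ∈ smallSet κ lam := by
    refine ⟨?_, ?_⟩
    · rintro _ rfl
      exact hγ1.trans (Cardinal.ord_lt_ord.2 hlt)
    · rw [Cardinal.mk_singleton]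
      have : (1 : Cardinal.{0}) < κ := (Cardinal.one_lt_aleph0).trans_le hκ
      simpa using this
  refine H.subset_mem _ (not_superset_mem H hs) _ ?_
  rintro b ⟨hb, hle⟩
  refine ⟨hb, fun hc => ?_⟩
  have h1 : γ + 1 ≤ supK κ b := le_supK (hc rfl) hγ1
  exact absurd (h1.trans hle) (not_le.2 (lt_add_one γ))

lemma exists_not_mem {κ lam : Cardinal.{0}} (H : IdealP κ lam) {P N : Set (Set Ordinal.{0})}
    (hP : P ∉ H.mem) (hN : N ∈ H.mem) : ∃ b ∈ P, b ∉ N := by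
  by_contra hc
  push Not at hc
  exact hP (H.subset_mem N hN P hc)

/-- Case I: generic homogeneous set. -/
lemma caseI {κ lam : Cardinal.{0}} (hreg : κ.IsRegular) (hlt : κ < lam) (H : IdealP κ lam)
    (hcof : H.cof < covM κ κ) (F : Ordinal.{0} → Set Ordinal.{0} → Fin 2)
    {P : Set (Set Ordinal.{0})} (hP : P ∈ plusOf κ lam H.mem)
    (hnull : ∀ a ∈ P, {b ∈ P | F (supK κ a) b ≠ 0} ∈ H.mem) :
    ∃ B ⊆ P, B ∈ plusOf κ lam H.mem ∧ ∀ p ∈ pairsK κ B, F p.1 p.2 = 0 := by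
  have hκ := hreg.aleph0_le
  obtain ⟨X, hX1, hX2, hX3⟩ := generic_exists hκ H hcof
  let good : Set Ordinal.{0} → Set Ordinal.{0} → Prop := fun x b =>
    supK κ b ∈ x ∧ ∀ a ∈ P, supK κ a ∈ x → supK κ a < supK κ b → F (supK κ a) b = 0
  obtain ⟨x, hx, hxD⟩ := hX3 (fun B => {x | x ∈ cantor κ ∧ ∃ b ∈ P, b ∉ B ∧ good x b}) (by
    intro N hN
    refine ⟨fun x h => h.1, ?_, ?_⟩
    · rintro x ⟨hx, b, hbP, hbN, hg⟩
      have hsb := supK_lt hreg (hP.1 hbP)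
      refine ⟨Iio (supK κ b + 1), x ∩ Iio (supK κ b + 1), ⟨?_, inter_subset_right, ?_⟩,
        ⟨hx, rfl⟩, ?_⟩
      · exact Iio_subset_Iio (succ_lt_ord hκ hsb).le
      · exact mk_Iio_lt (succ_lt_ord hκ hsb)
      · rintro y ⟨hy, hyx⟩
        have hiff : ∀ ξ ≤ supK κ b, ξ ∈ y ↔ ξ ∈ x := by
          intro ξ hξ
          have h1 : ξ ∈ Iio (supK κ b + 1) := Order.lt_add_one_iff.2 hξ
          constructor
          · intro h
            have : ξ ∈ y ∩ Iio (supK κ b + 1) := ⟨h, h1⟩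
            rw [hyx] at this
            exact this.1
          · intro h
            have : ξ ∈ x ∩ Iio (supK κ b + 1) := ⟨h, h1⟩
            rw [← hyx] at this
            exact this.1
        exact ⟨hy, b, hbP, hbN, (hiff _ le_rfl).2 hg.1, fun a ha h1 h2 =>
          hg.2 a ha ((hiff _ h2.le).1 h1) h2⟩
    · rintro a t ⟨ha, hta, hac⟩
      obtain ⟨γ, hγ, hγ'⟩ := exists_bound hreg ha hac
      have hbad : (⋃ α ∈ {α | α ∈ t ∧ ∃ c ∈ P, supK κ c = α}, {b ∈ P | F α b ≠ 0}) ∈ H.mem := by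
        apply biUnion_mem H
        · exact lt_of_le_of_lt (Cardinal.mk_le_mk_of_subset (fun α h => hta h.1)) hac
        · rintro _ ⟨_, c, hc, rfl⟩
          exact hnull c hc
      obtain ⟨b, hbP, hbb⟩ := exists_not_mem H hP.2
        (union_mem hκ H (union_mem hκ H (hX1 hN) (supK_le_mem hκ hlt H hγ)) hbad)
      simp only [mem_union, not_or] at hbb
      obtain ⟨⟨b1, b2⟩, b3⟩ := hbb
      have hgb : γ < supK κ b := by
        by_contra hc
        exact b2 ⟨hP.1 hbP, not_lt.1 hc⟩
      have hsb := supK_lt hreg (hP.1 hbP)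
      have hxc : t ∪ {supK κ b} ⊆ Iio κ.ord := by
        rintro ξ (h | rfl)
        · exact ha (hta h)
        · exact hsb
      refine ⟨t ∪ {supK κ b}, ⟨hxc, ?_⟩, hxc, b, hbP, b1, Or.inr rfl, ?_⟩
      · ext ξ
        constructor
        · rintro ⟨h | rfl, h'⟩
          · exact h
          · exact absurd (hγ' _ h') (not_le.2 hgb)
        · intro h
          exact ⟨Or.inl h, hta h⟩
      · rintro c hc (h | h) hlt'
        · by_contra hF
          exact b3 (mem_biUnion (x := supK κ c) ⟨h, c, hc, rfl⟩ ⟨hbP, hF⟩)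
        · exact absurd h hlt'.ne)
  refine ⟨{b ∈ P | good x b}, fun b h => h.1, ⟨fun b h => hP.1 h.1, ?_⟩, ?_⟩
  · intro hmem
    obtain ⟨N, hN, hsub⟩ := hX2 _ hmem
    obtain ⟨_, b, hb, hbN, hg⟩ := hxD N hN
    exact hbN (hsub ⟨hb, hg⟩)
  · rintro _ ⟨a, ha, b, hb, hab, rfl⟩
    exact hb.2.2 a ha.1 ha.2.1 hab

/-- Diagonal lemma: unboundedly many disjoint positive sets admit a positive diagonal set. -/
lemma diagonal {κ lam : Cardinal.{0}} (hreg : κ.IsRegular) (hlt : κ < lam) (H : IdealP κ lam)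
    (hcof : H.cof < covM κ κ) (C : Ordinal.{0} → Set (Set Ordinal.{0}))
    (hC : ∀ α, C α ⊆ smallSet κ lam)
    (hdisj : ∀ α β b, b ∈ C α → b ∈ C β → α = β) (S : Set Ordinal.{0})
    (hSκ : S ⊆ Iio κ.ord)
    (hSp : ∀ α ∈ S, C α ∉ H.mem)
    (hS : ∀ γ < κ.ord, ∃ α ∈ S, γ < α) :
    ∃ E, (∀ b ∈ E, ∃ α ∈ S, b ∈ C α) ∧ E ∉ H.mem ∧ ∀ α, E ∩ C α ∈ H.mem := by
  have hκ := hreg.aleph0_le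
  obtain ⟨X, hX1, hX2, hX3⟩ := generic_exists hκ H hcof
  let good : Set Ordinal.{0} → Set Ordinal.{0} → Prop := fun x b =>
    ∃ α ∈ S, b ∈ C α ∧ (∀ ξ ∈ x, α ≤ ξ → supK κ b < ξ) ∧ ∃ ξ ∈ x, supK κ b < ξ ∧ α ≤ ξ
  obtain ⟨x, hx, hxD⟩ := hX3 (fun B => {x | x ∈ cantor κ ∧ ∃ b, b ∉ B ∧ good x b}) (by
    intro N hN
    refine ⟨fun x h => h.1, ?_, ?_⟩
    · rintro x ⟨hx, b, hbN, α, hα, hbα, h1, ξ, hξ, h2, h3⟩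
      have hξκ : ξ < κ.ord := hx hξ
      refine ⟨Iio (ξ + 1), x ∩ Iio (ξ + 1), ⟨?_, inter_subset_right, ?_⟩, ⟨hx, rfl⟩, ?_⟩
      · exact Iio_subset_Iio (succ_lt_ord hκ hξκ).le
      · exact mk_Iio_lt (succ_lt_ord hκ hξκ)
      · rintro y ⟨hy, hyx⟩
        have hiff : ∀ ζ ≤ ξ, ζ ∈ y ↔ ζ ∈ x := by
          intro ζ hζ
          have h1 : ζ ∈ Iio (ξ + 1) := Order.lt_add_one_iff.2 hζ
          constructor
          · intro h
            have : ζ ∈ y ∩ Iio (ξ + 1) := ⟨h, h1⟩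
            rw [hyx] at this
            exact this.1
          · intro h
            have : ζ ∈ x ∩ Iio (ξ + 1) := ⟨h, h1⟩
            rw [← hyx] at this
            exact this.1
        refine ⟨hy, b, hbN, α, hα, hbα, ?_, ξ, (hiff _ le_rfl).2 hξ, h2, h3⟩
        intro ζ hζ hαζ
        rcases le_or_gt ζ ξ with h | h
        · exact h1 ζ ((hiff ζ h).1 hζ) hαζ
        · exact h2.trans h
    · rintro a t ⟨ha, hta, hac⟩
      obtain ⟨γ, hγ, hγ'⟩ := exists_bound hreg ha hac
      obtain ⟨α, hα, hγα⟩ := hS γ hγ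
      obtain ⟨b, hbα, hbN⟩ := exists_not_mem H (hSp α hα)
        (union_mem hκ H (hX1 hN) (supK_le_mem hκ hlt H hγ))
      simp only [mem_union, not_or] at hbN
      have hακ : α < κ.ord := hSκ hα
      have hsb := supK_lt hreg (hC α hbα)
      set ξ := max α (supK κ b) + 1 with hξ
      have hξκ : ξ < κ.ord := succ_lt_ord hκ (max_lt hακ hsb)
      have h1 : α < ξ := lt_of_le_of_lt (le_max_left _ _) (lt_add_one _)
      have h2 : supK κ b < ξ := lt_of_le_of_lt (le_max_right _ _) (lt_add_one _)
      have hxc : t ∪ {ξ} ⊆ Iio κ.ord := by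
        rintro ζ (h | rfl)
        · exact ha (hta h)
        · exact hξκ
      refine ⟨t ∪ {ξ}, ⟨hxc, ?_⟩, hxc, b, hbN.1, α, hα, hbα, ?_, ξ, Or.inr rfl, h2, h1.le⟩
      · ext ζ
        constructor
        · rintro ⟨h | rfl, h'⟩
          · exact h
          · exact absurd (hγ' _ h') (not_le.2 (hγα.trans h1))
        · intro h
          exact ⟨Or.inl h, hta h⟩
      · rintro ζ (h | rfl) hle
        · exact absurd (hle.trans (hγ' _ (hta h))) (not_le.2 hγα)
        · exact h2)
  refine ⟨{b | good x b}, ?_, ?_, ?_⟩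
  · rintro b ⟨α, hα, hb, _⟩
    exact ⟨α, hα, hb⟩
  · intro hmem
    obtain ⟨N, hN, hsub⟩ := hX2 _ hmem
    obtain ⟨_, b, hbN, hg⟩ := hxD N hN
    exact hbN (hsub hg)
  · intro α
    by_cases hex : ∃ ξ ∈ x, α ≤ ξ
    · obtain ⟨ξ, hξ, hle⟩ := hex
      refine H.subset_mem _ (supK_le_mem hκ hlt H (hx hξ)) _ ?_
      rintro b ⟨⟨β, _, hbβ, h1, _⟩, hbα⟩
      obtain rfl := hdisj _ _ _ hbβ hbα
      exact ⟨hC _ hbα, (h1 ξ hξ hle).le⟩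
    · have h0 : {b | good x b} ∩ C α = ∅ := by
        rw [eq_empty_iff_forall_notMem]
        rintro b ⟨⟨β, _, hbβ, _, ξ, hξ, _, hle⟩, hbα⟩
        obtain rfl := hdisj _ _ _ hbβ hbα
        exact hex ⟨ξ, hξ, hle⟩
      rw [h0]
      exact H.subset_mem _ (supK_le_mem hκ hlt H (γ := 0)
        (by rw [Cardinal.lt_ord]; simpa using hreg.pos)) _ (empty_subset _)

end PaperFormal

namespace PaperFormal

lemma children {κ lam : Cardinal.{0}} (hreg : κ.IsRegular) (hlt : κ < lam) (H : IdealP κ lam)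
    (hcof : H.cof < covM κ κ) (F : Ordinal.{0} → Set Ordinal.{0} → Fin 2)
    {A : Set (Set Ordinal.{0})} (hA : A ⊆ smallSet κ lam)
    (hno : ∀ P ⊆ A, P ∉ H.mem → ¬ ∀ a ∈ P, {b ∈ P | F (supK κ a) b ≠ 0} ∈ H.mem)
    (P : Set (Set Ordinal.{0})) (hPA : P ⊆ A) :
    ∃ Ch : Set (Set (Set Ordinal.{0})), #Ch < Cardinal.lift.{1} κ ∧
      (∀ Q ∈ Ch, ∃ a ∈ P, ∀ b ∈ Q, prec κ a b ∧ F (supK κ a) b = 1) ∧ P \ ⋃₀ Ch ∈ H.mem := by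
  classical
  have hκ := hreg.aleph0_le
  have hex : ∀ α, ∃ a, α ∈ supK κ '' P → a ∈ P ∧ supK κ a = α := by
    intro α
    by_cases h : α ∈ supK κ '' P
    · obtain ⟨a, ha, rfl⟩ := h
      exact ⟨a, fun _ => ⟨ha, rfl⟩⟩
    · exact ⟨∅, fun h' => absurd h' h⟩
  choose r hr using hex
  let E : Ordinal.{0} → Set (Set Ordinal.{0}) := fun α =>
    {b | b ∈ P ∧ α ∈ supK κ '' P ∧ F α b = 1 ∧ prec κ (r α) b}
  let fib : Ordinal.{0} → Set (Set Ordinal.{0}) := fun α =>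
    {b | b ∈ E α ∧ ∀ α' < α, b ∉ E α'}
  have hfibP : ∀ α, fib α ⊆ P := fun α b h => h.1.1
  have hdisj : ∀ α β b, b ∈ fib α → b ∈ fib β → α = β := by
    intro α β b h1 h2
    rcases lt_trichotomy α β with h | h | h
    · exact absurd h1.1 (h2.2 α h)
    · exact h
    · exact absurd h2.1 (h1.2 β h)
  have claim : ∀ C ⊆ P, (∀ α, C ∩ fib α ∈ H.mem) → C ∈ H.mem := by
    intro C hCP hC
    by_contra hCn
    refine hno C (hCP.trans hPA) hCn ?_
    intro a ha
    have haP := hCP ha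
    have haS := hA (hPA haP)
    have hα : supK κ a < κ.ord := supK_lt hreg haS
    obtain ⟨hrP, hrs⟩ := hr (supK κ a) ⟨a, haP, rfl⟩
    have hU : (⋃ α' ∈ Iio (supK κ a + 1), C ∩ fib α') ∈ H.mem :=
      biUnion_mem H (mk_Iio_lt (succ_lt_ord hκ hα)) (fun α' _ => hC α')
    have hN := union_mem hκ H (union_mem hκ H (not_superset_mem H (hA (hPA hrP)))
      (supK_le_mem hκ hlt H hα)) hU
    refine H.subset_mem _ hN _ ?_
    rintro b ⟨hbC, hF⟩
    have hbS := hA (hPA (hCP hbC))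
    by_cases h1 : r (supK κ a) ⊆ b
    · by_cases h2 : supK κ b ≤ supK κ a
      · exact Or.inl (Or.inr ⟨hbS, h2⟩)
      · right
        have hF1 : F (supK κ a) b = 1 := by
          have : ∀ t : Fin 2, t ≠ 0 → t = 1 := by decide
          exact this _ hF
        have hbE : b ∈ E (supK κ a) :=
          ⟨hCP hbC, ⟨a, haP, rfl⟩, hF1, h1, by rw [hrs]; exact not_le.1 h2⟩
        have hw : ∃ α', b ∈ E α' ∧ ∀ β < α', b ∉ E β := by
          have hwf : WellFounded ((· < ·) : Ordinal.{0} → Ordinal.{0} → Prop) := wellFounded_lt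
          refine ⟨hwf.min {α | b ∈ E α} ⟨_, hbE⟩, hwf.min_mem {α | b ∈ E α} ⟨_, hbE⟩, ?_⟩
          intro β hβ hbβ
          exact hwf.not_lt_min {α | b ∈ E α} hbβ hβ
        obtain ⟨α', hα'⟩ := hw
        have hle : α' ≤ supK κ a := by
          by_contra hc
          exact hα'.2 _ (not_le.1 hc) hbE
        exact mem_biUnion (show α' ∈ Iio (supK κ a + 1) from Order.lt_add_one_iff.2 hle)
          ⟨hbC, hα'⟩
    · exact Or.inl (Or.inl ⟨hbS, h1⟩)
  let S : Set Ordinal.{0} := {α | fib α ∉ H.mem}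
  have hempty : (∅ : Set (Set Ordinal.{0})) ∈ H.mem :=
    H.subset_mem _ (not_superset_mem H (a := ∅) ⟨empty_subset _, by
      simpa using (Cardinal.aleph0_pos.trans_le hκ)⟩) _ (empty_subset _)
  have hSκ : S ⊆ Iio κ.ord := by
    intro α hα
    by_contra hc
    apply hα
    have : fib α = ∅ := by
      rw [eq_empty_iff_forall_notMem]
      rintro b ⟨⟨_, ⟨a, ha, rfl⟩, _⟩, _⟩
      exact hc (supK_lt hreg (hA (hPA ha)))
    rw [this]; exact hempty
  have hSb : ∃ γ < κ.ord, ∀ α ∈ S, α ≤ γ := by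
    by_contra hc
    push Not at hc
    obtain ⟨D, hD1, hD2, hD3⟩ := diagonal hreg hlt H hcof fib
      (fun α => (hfibP α).trans (hPA.trans hA)) hdisj S hSκ (fun α h => h) hc
    refine hD2 (claim D ?_ hD3)
    intro b hb
    obtain ⟨α, _, h⟩ := hD1 b hb
    exact hfibP α h
  obtain ⟨γ, hγ, hSγ⟩ := hSb
  have hSc : #S < Cardinal.lift.{1} κ :=
    lt_of_le_of_lt (Cardinal.mk_le_mk_of_subset
      (show S ⊆ Iio (γ + 1) from fun α h => Order.lt_add_one_iff.2 (hSγ α h)))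
      (mk_Iio_lt (succ_lt_ord hκ hγ))
  refine ⟨fib '' S, lt_of_le_of_lt Cardinal.mk_image_le hSc, ?_, ?_⟩
  · rintro _ ⟨α, hα, rfl⟩
    have hne : (fib α).Nonempty := by
      rw [nonempty_iff_ne_empty]
      intro h
      apply hα
      rw [h]; exact hempty
    obtain ⟨b, hb⟩ := hne
    obtain ⟨h1, h2⟩ := hr α hb.1.2.1
    refine ⟨r α, h1, fun c hc => ⟨hc.1.2.2.2, ?_⟩⟩
    rw [h2]; exact hc.1.2.2.1
  · refine claim _ sdiff_subset ?_
    intro α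
    by_cases hα : α ∈ S
    · have : (P \ ⋃₀ (fib '' S)) ∩ fib α = ∅ := by
        rw [eq_empty_iff_forall_notMem]
        rintro b ⟨⟨_, h1⟩, h2⟩
        exact h1 ⟨_, ⟨α, hα, rfl⟩, h2⟩
      rw [this]; exact hempty
    · have h : fib α ∈ H.mem := by
        by_contra h; exact hα h
      exact H.subset_mem _ h _ inter_subset_right

def nodeOf (A : Set (Set Ordinal.{0})) (Q : Ordinal.{0} → Set (Set Ordinal.{0}))
    (i : Ordinal.{0}) : Set (Set Ordinal.{0}) := {b | b ∈ A ∧ ∀ k < i, b ∈ Q k}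

def levelOf (A : Set (Set Ordinal.{0}))
    (Ch : Set (Set Ordinal.{0}) → Set (Set (Set Ordinal.{0}))) (i : Ordinal.{0}) :
    Set (Set (Set Ordinal.{0})) :=
  {P | ∃ Q : Ordinal.{0} → Set (Set Ordinal.{0}),
    (∀ j < i, Q j ∈ Ch (nodeOf A Q j)) ∧ P = nodeOf A Q i}

lemma level_card {κ θ : Cardinal.{0}} (hreg : κ.IsRegular) (hθ : ℵ₀ ≤ θ) (hθκ : θ < κ)
    (harrow : ArrowKTheta κ θ.ord) (A : Set (Set Ordinal.{0}))
    (Ch : Set (Set Ordinal.{0}) → Set (Set (Set Ordinal.{0})))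
    (hCh : ∀ P ⊆ A, #(Ch P) < Cardinal.lift.{1} κ) (i : Ordinal.{0}) (hi : i < θ.ord) :
    #(levelOf A Ch i) < Cardinal.lift.{1} κ := by
  classical
  induction i using WellFoundedLT.induction with
  | ind i ih =>
  have hregl : (Cardinal.lift.{1} κ).IsRegular := hreg.lift
  have hiκ : i < κ.ord := hi.trans (Cardinal.ord_lt_ord.2 hθκ)
  let U : Set (Set (Set Ordinal.{0})) := ⋃ j ∈ Iio i, ⋃ P ∈ levelOf A Ch j, Ch P
  have hU : #U < Cardinal.lift.{1} κ := by
    refine (Cardinal.card_biUnion_lt_iff_forall_of_isRegular hregl (mk_Iio_lt hiκ)).2 ?_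
    intro j hj
    refine (Cardinal.card_biUnion_lt_iff_forall_of_isRegular hregl (ih j hj (lt_trans hj hi))).2 ?_
    rintro P ⟨Q, _, rfl⟩
    exact hCh _ (fun b hb => hb.1)
  let g : (Iio i → U) → Set (Set Ordinal.{0}) := fun q =>
    {b | b ∈ A ∧ ∀ k (hk : k < i), b ∈ (q ⟨k, hk⟩).1}
  have hsub : levelOf A Ch i ⊆ range g := by
    rintro _ ⟨Q, hQ, rfl⟩
    have hmem : ∀ j < i, Q j ∈ U := by
      intro j hj
      refine mem_biUnion (show j ∈ Iio i from hj) ?_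
      refine mem_biUnion (show nodeOf A Q j ∈ levelOf A Ch j from ?_) (hQ j hj)
      exact ⟨Q, fun k hk => hQ k (hk.trans hj), rfl⟩
    exact ⟨fun j => ⟨Q j.1, hmem j.1 j.2⟩, rfl⟩
  exact lt_of_le_of_lt ((Cardinal.mk_le_mk_of_subset hsub).trans Cardinal.mk_range_le)
    (fun_card_lt hreg hθ hθκ harrow hi hU)

lemma main_aux {κ lam θ : Cardinal.{0}} (hreg : κ.IsRegular)
    (hlt : κ < lam) (hθ : ℵ₀ ≤ θ) (hθκ : θ < κ) (harrow : ArrowKTheta κ θ.ord)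
    (H : IdealP κ lam) (hcof : H.cof < covM κ κ) (F : Ordinal.{0} → Set Ordinal.{0} → Fin 2)
    {A : Set (Set Ordinal.{0})} (hA : A ⊆ smallSet κ lam) (hAp : A ∉ H.mem)
    (hno : ∀ P ⊆ A, P ∉ H.mem → ¬ ∀ a ∈ P, {b ∈ P | F (supK κ a) b ≠ 0} ∈ H.mem) :
    ∃ B ⊆ A, OrdTypePrec κ B (θ.ord + 1) ∧ ∀ p ∈ pairsK κ B, F p.1 p.2 = 1 := by
  classical
  have hex : ∀ P : Set (Set Ordinal.{0}), ∃ Ch : Set (Set (Set Ordinal.{0})), P ⊆ A →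
      #Ch < Cardinal.lift.{1} κ ∧
      (∀ Q ∈ Ch, ∃ a ∈ P, ∀ b ∈ Q, prec κ a b ∧ F (supK κ a) b = 1) ∧ P \ ⋃₀ Ch ∈ H.mem := by
    intro P
    by_cases h : P ⊆ A
    · obtain ⟨Ch, hCh⟩ := children hreg hlt H hcof F hA hno P h
      exact ⟨Ch, fun _ => hCh⟩
    · exact ⟨∅, fun h' => absurd h' h⟩
  choose Ch hCh using hex
  have hcard := level_card hreg hθ hθκ harrow A Ch (fun P hP => (hCh P hP).1)
  have hN : (⋃ i ∈ Iio θ.ord, ⋃ P ∈ levelOf A Ch i, P \ ⋃₀ Ch P) ∈ H.mem := by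
    refine biUnion_mem H (mk_Iio_lt (Cardinal.ord_lt_ord.2 hθκ)) ?_
    intro i hi
    refine biUnion_mem H (hcard i hi) ?_
    rintro P ⟨Q, _, rfl⟩
    exact (hCh _ (fun b hb => hb.1)).2.2
  obtain ⟨b, hbA, hbN⟩ := exists_not_mem H hAp hN
  have hbstep : ∀ i < θ.ord, ∀ P ∈ levelOf A Ch i, b ∈ P → ∃ Q ∈ Ch P, b ∈ Q := by
    intro i hi P hP hbP
    by_contra hc
    apply hbN
    refine mem_biUnion (show i ∈ Iio θ.ord from hi) (mem_biUnion hP ⟨hbP, ?_⟩)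
    rintro ⟨Q, hQ, hbQ⟩
    exact hc ⟨Q, hQ, hbQ⟩
  let pick : Set (Set Ordinal.{0}) → Set (Set Ordinal.{0}) := fun P =>
    if h : ∃ Q ∈ Ch P, b ∈ Q then h.choose else ∅
  have hpick : ∀ P, (∃ Q ∈ Ch P, b ∈ Q) → pick P ∈ Ch P ∧ b ∈ pick P := by
    intro P h
    simp only [pick, dif_pos h]
    exact h.choose_spec
  have hQ : ∃ Q : Ordinal.{0} → Set (Set Ordinal.{0}), ∀ i, Q i = pick (nodeOf A Q i) := by
    let G : ∀ i : Ordinal.{0}, (∀ j, j < i → Set (Set Ordinal.{0})) → Set (Set Ordinal.{0}) :=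
      fun i q => pick {c | c ∈ A ∧ ∀ k (hk : k < i), c ∈ q k hk}
    refine ⟨WellFoundedLT.fix G, fun i => ?_⟩
    rw [WellFoundedLT.fix_eq]
    rfl
  obtain ⟨Q, hQ⟩ := hQ
  have hmain : ∀ i, i < θ.ord → Q i ∈ Ch (nodeOf A Q i) ∧ b ∈ Q i := by
    intro i
    induction i using WellFoundedLT.induction with
    | ind i ih =>
    intro hi
    rw [hQ i]
    apply hpick
    exact hbstep i hi _ ⟨Q, fun j hj => (ih j hj (hj.trans hi)).1, rfl⟩
      ⟨hbA, fun k hk => (ih k hk (hk.trans hi)).2⟩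
  have ha : ∀ i, ∃ a, i < θ.ord → a ∈ nodeOf A Q i ∧
      ∀ c ∈ Q i, prec κ a c ∧ F (supK κ a) c = 1 := by
    intro i
    by_cases hi : i < θ.ord
    · obtain ⟨a, h1, h2⟩ := (hCh (nodeOf A Q i) (fun b hb => hb.1)).2.1 _ (hmain i hi).1
      exact ⟨a, fun _ => ⟨h1, h2⟩⟩
    · exact ⟨∅, fun h => absurd h hi⟩
  choose a ha using ha
  let e : Ordinal.{0} → Set Ordinal.{0} := fun i => if i < θ.ord then a i else b
  have hkey : ∀ i < θ.ord + 1, ∀ j < θ.ord + 1, i < j →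
      prec κ (e i) (e j) ∧ F (supK κ (e i)) (e j) = 1 := by
    intro i hi j hj hij
    have hiθ : i < θ.ord := lt_of_lt_of_le hij (Order.lt_add_one_iff.1 hj)
    have hei : e i = a i := if_pos hiθ
    rw [hei]
    apply (ha i hiθ).2
    by_cases hjθ : j < θ.ord
    · have hej : e j = a j := if_pos hjθ
      rw [hej]
      exact (ha j hjθ).1.2 i hij
    · have hej : e j = b := if_neg hjθ
      rw [hej]
      exact (hmain i hiθ).2
  refine ⟨e '' Iio (θ.ord + 1), ?_, ⟨e, fun i hi j hj h => (hkey i hi j hj h).1, rfl⟩, ?_⟩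
  · rintro _ ⟨i, hi, rfl⟩
    by_cases hiθ : i < θ.ord
    · have hei : e i = a i := if_pos hiθ
      rw [hei]
      exact (ha i hiθ).1.1
    · have hei : e i = b := if_neg hiθ
      rw [hei]; exact hbA
  · rintro _ ⟨_, ⟨i, hi, rfl⟩, _, ⟨j, hj, rfl⟩, hs, rfl⟩
    rcases lt_trichotomy i j with h | h | h
    · exact (hkey i hi j hj h).2
    · subst h; exact absurd hs (lt_irrefl _)
    · exact absurd hs (not_lt.2 (hkey j hj i hi h).1.2.le)

end PaperFormal

namespace PaperFormal

/-- Suppose `θ` is an infinite cardinal `< κ` with `κ → (κ, θ)²`. Then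
`H⁺ →_κ (H⁺, θ+1)²` for every ideal `H` on `P_κ(λ)` with `cof(H) < cov(M_{κ,κ})`. -/
theorem arrowP_of_cof_lt_covM (κ lam θ : Cardinal.{0}) (hreg : κ.IsRegular) (huc : ℵ₀ < κ)
    (hlt : κ < lam) (hθ : ℵ₀ ≤ θ) (hθκ : θ < κ) (harrow : ArrowKTheta κ θ.ord) :
    ∀ H : IdealP κ lam, H.cof < covM κ κ → ArrowP κ lam H.mem (θ.ord + 1) := by
  classical
  intro H hcof F A hA
  by_cases h0 : ∃ B ⊆ A, B ∈ plusOf κ lam H.mem ∧ ∀ p ∈ pairsK κ B, F p.1 p.2 = 0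
  · obtain ⟨B, hBA, hB⟩ := h0
    exact ⟨B, hBA, Or.inl hB⟩
  · obtain ⟨B, hBA, hB⟩ := main_aux hreg hlt hθ hθκ harrow H hcof F hA.1 hA.2 (by
      intro P hPA hP hnull
      obtain ⟨B, hBP, hB⟩ := caseI hreg hlt H hcof F ⟨hPA.trans hA.1, hP⟩ hnull
      exact h0 ⟨B, hBP.trans hPA, hB⟩)
    exact ⟨B, hBA, Or.inr hB⟩

end PaperFormal
end
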